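/- An element y of s_{n+1} = {y ∈ M_{n+1}(ℂ) : y + conj(y) = 0}, written in block form y = [[y₀, v],[w, d]] with y₀ ∈ s_n, v ∈ i·ℝⁿ (column), w ∈ i·ℝ_n (row), d ∈ i·ℝ, is regular semi-simple (trivial GL_n(ℝ)-stabilizer and Zariski-closed orbit) if and only if ℂ[y₀]·v = ℂⁿ and w·ℂ[y₀] = ℂ_n. -/

import Mathlib

open Matrix MeasureTheory

noncomputable section

/-- The space `s_{n+1} = {y ∈ M_{n+1}(ℂ) | y + ȳ = 0}` (entrywise conjugation). -/
def sSet (n : ℕ) : Set (Matrix (Fin (n+1)) (Fin (n+1)) ℂ) :=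
  {y | y + y.map (starRingEnd ℂ) = 0}

/-- The embedding `g ↦ diag(g, 1)` of `n×n` matrices into `(n+1)×(n+1)` matrices. -/
def dgC {n : ℕ} (g : Matrix (Fin n) (Fin n) ℂ) : Matrix (Fin (n+1)) (Fin (n+1)) ℂ :=
  Matrix.reindex finSumFinEquiv finSumFinEquiv
    (Matrix.fromBlocks g 0 0 (1 : Matrix (Fin 1) (Fin 1) ℂ))

/-- The real version of `diag(H, 1)`. -/
def dgR {n : ℕ} (H : Matrix (Fin n) (Fin n) ℝ) : Matrix (Fin (n+1)) (Fin (n+1)) ℝ :=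
  Matrix.reindex finSumFinEquiv finSumFinEquiv
    (Matrix.fromBlocks H 0 0 (1 : Matrix (Fin 1) (Fin 1) ℝ))

/-- The action of `GL_n(ℝ)` on `(n+1)×(n+1)` complex matrices:
`g · y = diag(g,1) y diag(g,1)⁻¹`. -/
def mact {n : ℕ} (g : GL (Fin n) ℝ) (y : Matrix (Fin (n+1)) (Fin (n+1)) ℂ) :
    Matrix (Fin (n+1)) (Fin (n+1)) ℂ :=
  dgC (((g : Matrix (Fin n) (Fin n) ℝ)).map (fun r : ℝ => (r : ℂ))) * y *
    dgC ((((g⁻¹ : GL (Fin n) ℝ) : Matrix (Fin n) (Fin n) ℝ)).map (fun r : ℝ => (r : ℂ)))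

/-- The upper-left `n×n` block `y₀` of `y`. -/
def blk0 {n : ℕ} (y : Matrix (Fin (n+1)) (Fin (n+1)) ℂ) : Matrix (Fin n) (Fin n) ℂ :=
  Matrix.of fun i j => y i.castSucc j.castSucc

/-- The last-column block `v` of `y` (a column vector). -/
def blkv {n : ℕ} (y : Matrix (Fin (n+1)) (Fin (n+1)) ℂ) : Fin n → ℂ :=
  fun i => y i.castSucc (Fin.last n)

/-- The last-row block `w` of `y` (a row vector). -/
def blkw {n : ℕ} (y : Matrix (Fin (n+1)) (Fin (n+1)) ℂ) : Fin n → ℂ :=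
  fun j => y (Fin.last n) j.castSucc

/-- The lower-right entry `d` of `y`. -/
def blkd {n : ℕ} (y : Matrix (Fin (n+1)) (Fin (n+1)) ℂ) : ℂ :=
  y (Fin.last n) (Fin.last n)

/-- The spanning characterization of regular semi-simplicity:
`ℂ[y₀]·v = ℂⁿ` and `w·ℂ[y₀] = ℂ_n`. -/
def RSspan {n : ℕ} (y : Matrix (Fin (n+1)) (Fin (n+1)) ℂ) : Prop :=
  Submodule.span ℂ {u : Fin n → ℂ | ∃ k : ℕ, u = (blk0 y ^ k) *ᵥ blkv y} = ⊤ ∧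
  Submodule.span ℂ {u : Fin n → ℂ | ∃ k : ℕ, u = blkw y ᵥ* (blk0 y ^ k)} = ⊤

/-- The Jacquet–Rallis invariant `Inv(y) = (char(y₀;T), w v, w y₀ v, …, w y₀^{n-1} v, d)`. -/
def InvS {n : ℕ} (y : Matrix (Fin (n+1)) (Fin (n+1)) ℂ) :
    Polynomial ℂ × (Fin n → ℂ) × ℂ :=
  ((blk0 y).charpoly, fun k => blkw y ⬝ᵥ ((blk0 y ^ (k : ℕ)) *ᵥ blkv y), blkd y)

/-- The Lie algebra `u(n+1)` of the compact unitary group: `x* = -x`. -/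
def uSet (n : ℕ) : Set (Matrix (Fin (n+1)) (Fin (n+1)) ℂ) :=
  {x | xᴴ = -x}

/-- Regular semi-simplicity on the unitary side: `ℂ[x₀]·u = ℂⁿ`. -/
def RSspanU {n : ℕ} (x : Matrix (Fin (n+1)) (Fin (n+1)) ℂ) : Prop :=
  Submodule.span ℂ {u : Fin n → ℂ | ∃ k : ℕ, u = (blk0 x ^ k) *ᵥ blkv x} = ⊤

/-- The invariant on the unitary side,
`Inv(x) = (char(x₀;T), -(u,u), …, -(u, x₀^{n-1} u), d)`, with the standard
positive definite hermitian form `(a,b) = star a ⬝ᵥ b`. -/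
def InvU {n : ℕ} (x : Matrix (Fin (n+1)) (Fin (n+1)) ℂ) :
    Polynomial ℂ × (Fin n → ℂ) × ℂ :=
  ((blk0 x).charpoly,
   fun k => -(star (blkv x) ⬝ᵥ ((blk0 x ^ (k : ℕ)) *ᵥ blkv x)),
   blkd x)

/-- `y` matches to signature `(n,0)`: there is a matching regular semi-simple element
of `u(n+1)` (the positive definite case). -/
def MatchesN0 {n : ℕ} (y : Matrix (Fin (n+1)) (Fin (n+1)) ℂ) : Prop :=
  ∃ x ∈ uSet n, RSspanU x ∧ InvS y = InvU x

/-- The real "arrow" matrix with diagonal `(λ₁,…,λₙ,d)` and last row/column `μ₁,…,μₙ`. -/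
def arrow {n : ℕ} (lam mu : Fin n → ℝ) (d : ℝ) : Matrix (Fin (n+1)) (Fin (n+1)) ℝ :=
  Matrix.reindex finSumFinEquiv finSumFinEquiv
    (Matrix.fromBlocks (Matrix.diagonal lam)
      (Matrix.of fun i (_ : Fin 1) => mu i)
      (Matrix.of fun (_ : Fin 1) j => mu j)
      (Matrix.of fun _ _ => d))

/-- `i·A` for a real matrix `A`, viewed inside `M_{n+1}(ℂ)`. -/
def iM {n : ℕ} (A : Matrix (Fin (n+1)) (Fin (n+1)) ℝ) : Matrix (Fin (n+1)) (Fin (n+1)) ℂ :=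
  Complex.I • (A.map fun r : ℝ => (r : ℂ))

/-- The element `i·M` of `s_{n+1}` attached to arrow data. -/
def iArrow {n : ℕ} (lam mu : Fin n → ℝ) (d : ℝ) : Matrix (Fin (n+1)) (Fin (n+1)) ℂ :=
  iM (arrow lam mu d)

/-- A real-valued polynomial function on a real vector space: an element of the
subalgebra of functions generated by the linear functionals. -/
def IsPolyFun {V : Type*} [AddCommGroup V] [Module ℝ V] (f : V → ℝ) : Prop :=
  f ∈ Algebra.adjoin ℝ (Set.range fun l : V →ₗ[ℝ] ℝ => ⇑l)

/-- Zariski-closed subsets of a real vector space: common zero loci of families of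
polynomial functions. -/
def IsRZClosed {V : Type*} [AddCommGroup V] [Module ℝ V] (s : Set V) : Prop :=
  ∃ T : Set (V → ℝ), (∀ f ∈ T, IsPolyFun f) ∧ s = {x | ∀ f ∈ T, f x = 0}

/-- Regular semi-simplicity as defined in the paper: trivial `GL_n(ℝ)`-stabilizer
and Zariski-closed orbit. -/
def RSdef {n : ℕ} (y : Matrix (Fin (n+1)) (Fin (n+1)) ℂ) : Prop :=
  (∀ g : GL (Fin n) ℝ, mact g y = y → g = 1) ∧
  IsRZClosed {z | ∃ g : GL (Fin n) ℝ, z = mact g y}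

/-- The set `𝔖` of regular semi-simple elements of `s_{n+1}` matching signature `(n,0)`. -/
def frakS (n : ℕ) : Set (Matrix (Fin (n+1)) (Fin (n+1)) ℂ) :=
  {y | y ∈ sSet n ∧ RSspan y ∧ MatchesN0 y}

/-!
Write `y = i·[[A, v], [w, d]]` with real blocks.

If `v` is not cyclic for `A`, let `E` be a projection of `ℝⁿ` onto the proper `A`-stable subspace
`ℝ[A]·v`. Conjugating by `E + t⁻¹ (1 - E)` and letting `t → 0` kills the off-diagonal part of `y`
with respect to `diag(E, 1)`, and the limit is stabilized by all `E + t (1 - E)`. If the orbit is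
Zariski closed it contains this limit, so the stabilizer of `y` is not trivial. A non-cyclic `w` is
handled by the transposed argument.

If `v` and `w` are both cyclic, an element fixing `A` and `v` fixes the Krylov basis
`v, A v, …, A ^ (n - 1) v`, so it is `1`. The products of the Krylov matrices of `w` and `v`, with
or without `A` in between, have the moments `w A ^ k v` as entries, so the moments determine
`(A, v, w)` up to conjugation. Hence the orbit is cut out by `d` and the moments.
-/

section Krylov

variable {R : Type*} [CommRing R] {m : Type*} [Fintype m] [DecidableEq m] {n : ℕ}

/-- `v` is a cyclic vector of `A` if `R[A]·v` is the whole space. -/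
def IsCyclicVector (A : Matrix m m R) (v : m → R) : Prop :=
  Submodule.span R (Set.range fun k : ℕ => A ^ k *ᵥ v) = ⊤

/-- The Krylov matrix, with columns `v, A v, …, A ^ (n - 1) v`. -/
def krylov (A : Matrix (Fin n) (Fin n) R) (v : Fin n → R) : Matrix (Fin n) (Fin n) R :=
  Matrix.of fun i j => (A ^ (j : ℕ) *ᵥ v) i

/-- The moments `w A ^ k v` of the triple `(A, v, w)`; they are invariant under change of basis. -/
def moment (A : Matrix m m R) (v w : m → R) (k : ℕ) : R :=
  w ⬝ᵥ (A ^ k *ᵥ v)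

lemma span_range_pow_fin_eq_span_range_pow (A : Matrix (Fin n) (Fin n) R) :
    Submodule.span R (Set.range fun j : Fin n => A ^ (j : ℕ)) =
      Submodule.span R (Set.range fun k : ℕ => A ^ k) := by
  nontriviality R
  have powers : (Submonoid.closure {A} : Set (Matrix (Fin n) (Fin n) R)) =
      Set.range fun k : ℕ => A ^ k := by
    ext; simp [Submonoid.mem_closure_singleton]
  have powers_lt : (fun k => A ^ k) '' Set.Iio A.charpoly.natDegree =
      Set.range fun j : Fin n => A ^ (j : ℕ) := by
    ext; simp [charpoly_natDegree_eq_dim, Fin.exists_iff]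
  have span_eq_adjoin :=
    Submodule.span_range_natDegree_eq_adjoin A.charpoly_monic A.aeval_self_charpoly
  simpa only [Algebra.adjoin_eq_span, powers, Finset.coe_image, Finset.coe_range, powers_lt]
    using span_eq_adjoin

lemma span_range_pow_fin_mulVec (A : Matrix (Fin n) (Fin n) R) (v : Fin n → R) :
    Submodule.span R (Set.range fun j : Fin n => A ^ (j : ℕ) *ᵥ v) =
      Submodule.span R (Set.range fun k : ℕ => A ^ k *ᵥ v) := by
  have := congrArg (Submodule.map ((mulVecBilin R R).flip v))
    (span_range_pow_fin_eq_span_range_pow A)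
  rwa [Submodule.map_span, Submodule.map_span, ← Set.range_comp, ← Set.range_comp] at this

lemma isCyclicVector_iff_isUnit_krylov {A : Matrix (Fin n) (Fin n) R} {v : Fin n → R} :
    IsCyclicVector A v ↔ IsUnit (krylov A v) := by
  rw [IsCyclicVector, ← span_range_pow_fin_mulVec, ← mulVec_surjective_iff_isUnit]
  exact (congrArg (· = ⊤) (range_mulVecLin (krylov A v))).to_iff.symm.trans LinearMap.range_eq_top

lemma mul_krylov {g A B : Matrix (Fin n) (Fin n) R} (h : SemiconjBy g A B) (v : Fin n → R) :
    g * krylov A v = krylov B (g *ᵥ v) := by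
  ext i j
  change (g *ᵥ (A ^ (j : ℕ) *ᵥ v)) i = (B ^ (j : ℕ) *ᵥ (g *ᵥ v)) i
  rw [mulVec_mulVec, mulVec_mulVec, (h.pow_right j).eq]

lemma krylov_smul_smul (a b : R) (A : Matrix (Fin n) (Fin n) R) (v : Fin n → R) :
    krylov (a • A) (b • v) = krylov A v * diagonal fun j : Fin n => b * a ^ (j : ℕ) := by
  ext i j
  simp [krylov, smul_pow, smul_mulVec, mulVec_smul, mul_comm, mul_assoc]

lemma krylov_map {S : Type*} [CommRing S] (f : R →+* S) (A : Matrix (Fin n) (Fin n) R)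
    (v : Fin n → R) : krylov (A.map f) (f ∘ v) = (krylov A v).map f := by
  ext i j
  simp only [krylov, of_apply, map_apply, RingHom.map_mulVec, map_pow, ← RingHom.mapMatrix_apply]

lemma isCyclicVector_smul_smul_iff {a b : R} (ha : IsUnit a) (hb : IsUnit b)
    {A : Matrix (Fin n) (Fin n) R} {v : Fin n → R} :
    IsCyclicVector (a • A) (b • v) ↔ IsCyclicVector A v := by
  have isUnit_diagonal : IsUnit (diagonal fun j : Fin n => b * a ^ (j : ℕ)) :=
    Matrix.isUnit_diagonal.2 (Pi.isUnit_iff.2 fun j => hb.mul (ha.pow j))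
  rw [isCyclicVector_iff_isUnit_krylov, isCyclicVector_iff_isUnit_krylov, krylov_smul_smul,
    isUnit_diagonal.mul_right_iff]

lemma isCyclicVector_map_iff {S : Type*} [CommRing S] (f : R →+* S) [IsLocalHom f]
    {A : Matrix (Fin n) (Fin n) R} {v : Fin n → R} :
    IsCyclicVector (A.map f) (f ∘ v) ↔ IsCyclicVector A v := by
  rw [isCyclicVector_iff_isUnit_krylov, isCyclicVector_iff_isUnit_krylov, krylov_map,
    isUnit_iff_isUnit_det, isUnit_iff_isUnit_det, ← RingHom.mapMatrix_apply, ← RingHom.map_det,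
    isUnit_map_iff]

lemma IsCyclicVector.eq_one_of_commute {g A : Matrix (Fin n) (Fin n) R} {v : Fin n → R}
    (hv : IsCyclicVector A v) (hA : Commute g A) (hgv : g *ᵥ v = v) : g = 1 := by
  have fixes_krylov : g * krylov A v = 1 * krylov A v := by rw [mul_krylov hA, hgv, one_mul]
  exact (isCyclicVector_iff_isUnit_krylov.1 hv).mul_right_cancel fixes_krylov

lemma moment_conj (g : GL m R) (A : Matrix m m R) (v w : m → R) (k : ℕ) :
    moment (g.val * A * g⁻¹.val) (g.val *ᵥ v) (w ᵥ* g⁻¹.val) k = moment A v w k := by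
  simp only [moment, Units.conj_pow, ← dotProduct_mulVec, mulVec_mulVec, ← mul_assoc,
    Units.inv_mul, one_mul, Units.inv_mul_cancel_right]

lemma krylov_transpose_mulVec_apply (A : Matrix (Fin n) (Fin n) R) (w x : Fin n → R) (i : Fin n) :
    ((krylov Aᵀ w)ᵀ *ᵥ x) i = w ⬝ᵥ (A ^ (i : ℕ) *ᵥ x) := by
  rw [dotProduct_mulVec, ← mulVec_transpose, transpose_pow]
  rfl

lemma krylov_transpose_mul_mul_krylov_apply (A M : Matrix (Fin n) (Fin n) R) (v w : Fin n → R)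
    (i j : Fin n) :
    ((krylov Aᵀ w)ᵀ * M * krylov A v) i j = w ⬝ᵥ ((A ^ (i : ℕ) * M * A ^ (j : ℕ)) *ᵥ v) := by
  have column : ((krylov Aᵀ w)ᵀ * M * krylov A v) i j =
      ((krylov Aᵀ w)ᵀ *ᵥ (M *ᵥ (A ^ (j : ℕ) *ᵥ v))) i := by
    rw [mulVec_mulVec]
    rfl
  rw [column, krylov_transpose_mulVec_apply, mulVec_mulVec, mulVec_mulVec, mul_assoc]

lemma exists_conj_of_sandwich_eq {V W V' W' A A' : Matrix m m R}
    {v w v' w' : m → R} (hV : IsUnit V) (hW : IsUnit W) (hWV : W' * V' = W * V)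
    (hWAV : W' * A' * V' = W * A * V) (hWv : W' *ᵥ v' = W *ᵥ v) (hwV : w' ᵥ* V' = w ᵥ* V) :
    ∃ g : GL m R, A' = g.val * A * g⁻¹.val ∧ v' = g.val *ᵥ v ∧ w' = w ᵥ* g⁻¹.val := by
  have hW'V' : IsUnit (W' * V') := hWV ▸ hW.mul hV
  obtain ⟨V, rfl⟩ := hV
  obtain ⟨V', rfl⟩ := isUnit_of_mul_isUnit_right hW'V'
  obtain ⟨W', rfl⟩ := isUnit_of_mul_isUnit_left hW'V'
  obtain ⟨g, rfl⟩ : ∃ g : GL m R, V' = g * V := ⟨V' * V⁻¹, by simp⟩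
  obtain rfl : W'.val * g.val = W := by
    rw [Units.val_mul, ← mul_assoc] at hWV
    exact V.isUnit.mul_right_cancel hWV
  refine ⟨g, ?_, ?_, ?_⟩
  · have hA'g : A' * g.val = g.val * A :=
      V.isUnit.mul_right_cancel (W'.isUnit.mul_left_cancel (by simpa [mul_assoc] using hWAV))
    rw [← hA'g, Units.mul_inv_cancel_right]
  · refine mulVec_injective_of_isUnit W'.isUnit ?_
    rw [hWv, mulVec_mulVec]
  · have hw'g : w' ᵥ* g.val = w :=
      vecMul_injective_of_isUnit V.isUnit (by simpa [vecMul_vecMul] using hwV)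
    simp [← hw'g, vecMul_vecMul]

lemma exists_conj_of_moment_eq {A A' : Matrix (Fin n) (Fin n) R} {v w v' w' : Fin n → R}
    (hv : IsCyclicVector A v) (hw : IsCyclicVector Aᵀ w)
    (h : ∀ k, moment A' v' w' k = moment A v w k) :
    ∃ g : GL (Fin n) R, A' = g.val * A * g⁻¹.val ∧ v' = g.val *ᵥ v ∧ w' = w ᵥ* g⁻¹.val := by
  refine exists_conj_of_sandwich_eq (V' := krylov A' v') (W' := (krylov A'ᵀ w')ᵀ)
    (isCyclicVector_iff_isUnit_krylov.1 hv)
    ((isUnit_transpose _).2 (isCyclicVector_iff_isUnit_krylov.1 hw)) ?_ ?_ ?_ ?_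
  · rw [← mul_one (krylov A'ᵀ w')ᵀ, ← mul_one (krylov Aᵀ w)ᵀ]
    ext i j
    rw [krylov_transpose_mul_mul_krylov_apply, krylov_transpose_mul_mul_krylov_apply, mul_one,
      mul_one, ← pow_add, ← pow_add]
    exact h _
  · ext i j
    simp only [krylov_transpose_mul_mul_krylov_apply, ← pow_succ, ← pow_add]
    exact h _
  · ext i
    simp only [krylov_transpose_mulVec_apply]
    exact h _
  · ext j
    exact h j

end Krylov

section Idempotent

variable {R S : Type*} [CommRing R] [Ring S] [Algebra R S] {e : S}

/-- The one-parameter family `t ↦ e + t (1 - e)` attached to an idempotent `e`: it acts as `1` on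
the image of `e` and as `t` on its kernel. -/
def idempotentScaling (he : IsIdempotentElem e) : R →* S where
  toFun t := e + t • (1 - e)
  map_one' := by simp
  map_mul' t s := by
    simp [mul_add, add_mul, he.eq, he.one_sub.eq, he.mul_one_sub_self, he.one_sub_mul_self,
      smul_smul, mul_comm]

/-- The diagonal part `e a e + (1 - e) a (1 - e)` of the Peirce decomposition of `a`. -/
def peirceDiagonal (e a : S) : S :=
  e * a * e + (1 - e) * a * (1 - e)

lemma idempotentScaling_apply (he : IsIdempotentElem e) (t : R) :
    idempotentScaling he t = e + t • (1 - e) :=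
  rfl

lemma idempotentScaling_mul_mul (he : IsIdempotentElem e) (a : S) {t s : R} (hts : t * s = 1) :
    idempotentScaling he t * a * idempotentScaling he s =
      peirceDiagonal e a + s • (e * a * (1 - e)) + t • ((1 - e) * a * e) := by
  simp only [idempotentScaling_apply, peirceDiagonal, add_mul, mul_add, smul_mul_assoc,
    mul_smul_comm, smul_add, smul_smul]
  rw [mul_comm s t, hts]
  module

lemma commute_idempotentScaling_peirceDiagonal (he : IsIdempotentElem e) (a : S) (t : R) :
    Commute (idempotentScaling he t) (peirceDiagonal e a) := by
  have commute_e : Commute e (peirceDiagonal e a) := by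
    have left : e * peirceDiagonal e a = e * a * e := by
      simp [peirceDiagonal, mul_add, ← mul_assoc, he.eq, he.mul_one_sub_self]
    have right : peirceDiagonal e a * e = e * a * e := by
      simp [peirceDiagonal, add_mul, mul_assoc, he.eq, he.one_sub_mul_self]
    exact left.trans right.symm
  exact commute_e.add_left (((Commute.one_left _).sub_left commute_e).smul_left t)

lemma exists_isIdempotentElem_of_mem_invtSubmodule {K m : Type*} [Field K] [Fintype m]
    [DecidableEq m] {A : Matrix m m K} {U : Submodule K (m → K)}
    (hU : U ∈ Module.End.invtSubmodule A.toLin') (hU_top : U ≠ ⊤) :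
    ∃ E : Matrix m m K, IsIdempotentElem E ∧ E ≠ 1 ∧ (1 - E) * A * E = 0 ∧
      ∀ u ∈ U, (1 - E) *ᵥ u = 0 := by
  obtain ⟨Q, hUQ⟩ := U.exists_isCompl
  obtain ⟨E, hE⟩ := Matrix.toLinAlgEquiv'.surjective (U.projection Q hUQ)
  have idempotent_projection := U.isIdempotentElem_projection hUQ
  have range_projection := U.range_projection hUQ
  refine ⟨E, ?_, ?_, ?_, fun u hu => ?_⟩
  · apply Matrix.toLinAlgEquiv'.injective
    rw [map_mul, hE, idempotent_projection.eq]
  · rintro rfl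
    rw [map_one] at hE
    exact hU_top (range_projection ▸ hE ▸ LinearMap.range_id)
  · have compression : U.projection Q hUQ ∘ₗ A.toLin' ∘ₗ U.projection Q hUQ =
        A.toLin' ∘ₗ U.projection Q hUQ :=
      (LinearMap.IsIdempotentElem.range_mem_invtSubmodule_iff idempotent_projection).1
        (range_projection.symm ▸ hU)
    rw [sub_mul, sub_mul, one_mul, sub_eq_zero, mul_assoc]
    apply Matrix.toLinAlgEquiv'.injective
    simp only [map_mul, hE]
    exact compression.symm
  · have hEu : E *ᵥ u = u := by
      rw [← Matrix.toLinAlgEquiv'_apply, hE, Submodule.projection_apply_of_mem_left hUQ hu]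
    rw [sub_mulVec, one_mulVec, hEu, sub_self]

lemma span_range_pow_mulVec_mem_invtSubmodule {m : Type*} [Fintype m] [DecidableEq m]
    (A : Matrix m m R) (v : m → R) :
    Submodule.span R (Set.range fun k : ℕ => A ^ k *ᵥ v) ∈ Module.End.invtSubmodule A.toLin' := by
  rw [Module.End.mem_invtSubmodule, Submodule.span_le]
  rintro _ ⟨k, rfl⟩
  refine Submodule.subset_span ⟨k + 1, ?_⟩
  rw [toLin'_apply, mulVec_mulVec, ← pow_succ']

lemma exists_isIdempotentElem_of_not_isCyclicVector {K m : Type*} [Field K] [Fintype m]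
    [DecidableEq m] {A : Matrix m m K} {v : m → K} (h : ¬ IsCyclicVector A v) :
    ∃ E : Matrix m m K, IsIdempotentElem E ∧ E ≠ 1 ∧ (1 - E) * A * E = 0 ∧ (1 - E) *ᵥ v = 0 := by
  obtain ⟨E, hE, hE_ne, hAE, hEU⟩ := exists_isIdempotentElem_of_mem_invtSubmodule
    (span_range_pow_mulVec_mem_invtSubmodule A v) h
  exact ⟨E, hE, hE_ne, hAE, hEU v (Submodule.subset_span ⟨0, by simp⟩)⟩

end Idempotent

section Polynomial

variable {V : Type*} [AddCommGroup V] [Module ℝ V]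

namespace IsPolyFun

lemma linearMap (l : V →ₗ[ℝ] ℝ) : IsPolyFun l :=
  Algebra.subset_adjoin ⟨l, rfl⟩

lemma const (c : ℝ) : IsPolyFun fun _ : V => c :=
  Subalgebra.algebraMap_mem _ c

lemma mul {f g : V → ℝ} (hf : IsPolyFun f) (hg : IsPolyFun g) : IsPolyFun fun z => f z * g z :=
  Subalgebra.mul_mem _ hf hg

lemma sub {f g : V → ℝ} (hf : IsPolyFun f) (hg : IsPolyFun g) : IsPolyFun fun z => f z - g z :=
  Subalgebra.sub_mem _ hf hg

lemma sum {ι : Type*} {s : Finset ι} {f : ι → V → ℝ} (hf : ∀ i, IsPolyFun (f i)) :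
    IsPolyFun fun z => ∑ i ∈ s, f i z := by
  simpa only [IsPolyFun, Finset.sum_fn] using Subalgebra.sum_mem _ fun i (_ : i ∈ s) => hf i

lemma pow_apply {m : Type*} [Fintype m] [DecidableEq m] {A : V → Matrix m m ℝ}
    (hA : ∀ i j, IsPolyFun fun z => A z i j) (k : ℕ) (i j : m) :
    IsPolyFun fun z => (A z ^ k) i j := by
  induction k generalizing j with
  | zero => simpa only [pow_zero] using const _
  | succ k ih =>
    simp only [pow_succ, mul_apply]
    exact sum fun l => (ih l).mul (hA l j)

lemma moment {m : Type*} [Fintype m] [DecidableEq m] {A : V → Matrix m m ℝ} {v w : V → m → ℝ}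
    (hA : ∀ i j, IsPolyFun fun z => A z i j) (hv : ∀ i, IsPolyFun fun z => v z i)
    (hw : ∀ i, IsPolyFun fun z => w z i) (k : ℕ) :
    IsPolyFun fun z => moment (A z) (v z) (w z) k := by
  simp only [_root_.moment, dotProduct, mulVec]
  exact sum fun i => (hw i).mul (sum fun j => (pow_apply hA k i j).mul (hv j))

lemma exists_polynomial_eval_eq {f : V → ℝ} (hf : IsPolyFun f) (a b : V) :
    ∃ p : Polynomial ℝ, ∀ t : ℝ, f (a + t • b) = p.eval t := by
  induction hf using Algebra.adjoin_induction with
  | mem _ hl =>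
    obtain ⟨l, rfl⟩ := hl
    exact ⟨Polynomial.C (l a) + Polynomial.C (l b) * Polynomial.X, fun t => by
      simp [mul_comm t]⟩
  | algebraMap c => exact ⟨Polynomial.C c, fun t => by simp⟩
  | add _ _ _ _ hf hg =>
    obtain ⟨⟨p, hp⟩, ⟨q, hq⟩⟩ := And.intro hf hg
    exact ⟨p + q, fun t => by simp [hp, hq]⟩
  | mul _ _ _ _ hf hg =>
    obtain ⟨⟨p, hp⟩, ⟨q, hq⟩⟩ := And.intro hf hg
    exact ⟨p * q, fun t => by simp [hp, hq]⟩

end IsPolyFun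

namespace IsRZClosed

lemma setOf_eq {f : V → ℝ} (hf : IsPolyFun f) (c : ℝ) : IsRZClosed {z | f z = c} :=
  ⟨{fun z => f z - c}, by simpa using hf.sub (.const c), by simp [sub_eq_zero]⟩

lemma setOf_forall {ι : Sort*} {p : ι → V → Prop} (hp : ∀ i, IsRZClosed {z | p i z}) :
    IsRZClosed {z | ∀ i, p i z} := by
  choose F hF hpF using hp
  refine ⟨⋃ i, F i, by simpa using fun f i => hF i f, ?_⟩
  ext z
  have mem_iff (i) : p i z ↔ ∀ f ∈ F i, f z = 0 := Set.ext_iff.1 (hpF i) z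
  simpa [mem_iff] using forall_comm

lemma inter {s t : Set V} (hs : IsRZClosed s) (ht : IsRZClosed t) : IsRZClosed (s ∩ t) := by
  obtain ⟨F, hF, rfl⟩ := hs
  obtain ⟨G, hG, rfl⟩ := ht
  refine ⟨F ∪ G, fun f hf => hf.elim (hF f) (hG f), ?_⟩
  ext z
  simp [or_imp, forall_and]

lemma mem_of_forall_add_smul_mem {s : Set V} (hs : IsRZClosed s) {a b : V}
    (h : ∀ t : ℝ, t ≠ 0 → a + t • b ∈ s) : a ∈ s := by
  obtain ⟨F, hF, rfl⟩ := hs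
  intro f hf
  obtain ⟨p, hp⟩ := (hF f hf).exists_polynomial_eval_eq a b
  have p_eq_zero : p = 0 :=
    p.eq_zero_of_infinite_isRoot <| (Set.finite_singleton 0).infinite_compl.mono fun t ht =>
      (hp t).symm.trans (h t ht f hf)
  simpa [p_eq_zero] using hp 0

end IsRZClosed

end Polynomial

section Bordered

variable {R : Type*} {n : ℕ}

/-- The matrix with blocks `[[A, v], [w, d]]`, indexed like the matrices of `dgR` and `arrow`. -/
def bordered (A : Matrix (Fin n) (Fin n) R) (v w : Fin n → R) (d : R) :
    Matrix (Fin (n + 1)) (Fin (n + 1)) R :=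
  reindex finSumFinEquiv finSumFinEquiv
    (fromBlocks A (replicateCol (Fin 1) v) (replicateRow (Fin 1) w) (of fun _ _ => d))

variable (A A' : Matrix (Fin n) (Fin n) R) (v w v' w' : Fin n → R) (d d' : R)

@[simp]
lemma bordered_castSucc_castSucc (i j : Fin n) :
    bordered A v w d i.castSucc j.castSucc = A i j := by
  simp [bordered]

@[simp]
lemma bordered_castSucc_last (i : Fin n) : bordered A v w d i.castSucc (Fin.last n) = v i := by
  simp [bordered]

@[simp]
lemma bordered_last_castSucc (j : Fin n) : bordered A v w d (Fin.last n) j.castSucc = w j := by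
  simp [bordered]

@[simp]
lemma bordered_last_last : bordered A v w d (Fin.last n) (Fin.last n) = d := by
  simp [bordered]

variable [CommRing R]

lemma bordered_mul_bordered :
    bordered A v w d * bordered A' v' w' d' =
      bordered (A * A' + vecMulVec v w') (A *ᵥ v' + d' • v) (w ᵥ* A' + d • w')
        (w ⬝ᵥ v' + d * d') := by
  ext i j
  induction i using Fin.lastCases <;> induction j using Fin.lastCases <;>
    simp [mul_apply, Fin.sum_univ_castSucc, vecMulVec_apply, mulVec, vecMul, dotProduct, mul_comm]

lemma bordered_add_bordered :
    bordered A v w d + bordered A' v' w' d' = bordered (A + A') (v + v') (w + w') (d + d') := by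
  ext i j
  induction i using Fin.lastCases <;> induction j using Fin.lastCases <;> simp

lemma smul_bordered (t : R) : t • bordered A v w d = bordered (t • A) (t • v) (t • w) (t • d) := by
  ext i j
  induction i using Fin.lastCases <;> induction j using Fin.lastCases <;> simp

lemma bordered_zero : bordered (0 : Matrix (Fin n) (Fin n) R) 0 0 0 = 0 := by
  ext i j
  induction i using Fin.lastCases <;> induction j using Fin.lastCases <;> simp

lemma bordered_one : bordered (1 : Matrix (Fin n) (Fin n) R) 0 0 1 = 1 := by
  ext i j
  induction i using Fin.lastCases <;> induction j using Fin.lastCases <;>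
    simp [one_apply, (Fin.castSucc_ne_last _).symm]

end Bordered

section DiagonalEmbedding

variable {n : ℕ} {E : Matrix (Fin n) (Fin n) ℝ}

lemma dgR_eq_bordered (g : Matrix (Fin n) (Fin n) ℝ) : dgR g = bordered g 0 0 1 := by
  ext i j
  induction i using Fin.lastCases <;> induction j using Fin.lastCases <;> simp [dgR]

lemma dgR_one : dgR (1 : Matrix (Fin n) (Fin n) ℝ) = 1 := by
  rw [dgR_eq_bordered, bordered_one]

lemma dgR_mul (g h : Matrix (Fin n) (Fin n) ℝ) : dgR (g * h) = dgR g * dgR h := by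
  simp [dgR_eq_bordered, bordered_mul_bordered]

lemma dgR_mul_bordered_mul_dgR (g h A : Matrix (Fin n) (Fin n) ℝ) (v w : Fin n → ℝ) (d : ℝ) :
    dgR g * bordered A v w d * dgR h = bordered (g * A * h) (g *ᵥ v) (w ᵥ* h) d := by
  simp [dgR_eq_bordered, bordered_mul_bordered]

lemma one_sub_dgR (E : Matrix (Fin n) (Fin n) ℝ) : 1 - dgR E = bordered (1 - E) 0 0 0 := by
  rw [dgR_eq_bordered, sub_eq_iff_eq_add, bordered_add_bordered]
  simp [bordered_one]

lemma isIdempotentElem_dgR (hE : IsIdempotentElem E) : IsIdempotentElem (dgR E) := by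
  rw [IsIdempotentElem, ← dgR_mul, hE.eq]

lemma dgR_idempotentScaling (hE : IsIdempotentElem E) (t : ℝ) :
    dgR (idempotentScaling hE t) = idempotentScaling (isIdempotentElem_dgR hE) t := by
  rw [idempotentScaling_apply, idempotentScaling_apply, one_sub_dgR, dgR_eq_bordered,
    dgR_eq_bordered, smul_bordered, bordered_add_bordered]
  simp

variable (E A : Matrix (Fin n) (Fin n) ℝ) (v w : Fin n → ℝ) (d : ℝ)

lemma one_sub_dgR_mul_bordered_mul_dgR :
    (1 - dgR E) * bordered A v w d * dgR E = bordered ((1 - E) * A * E) ((1 - E) *ᵥ v) 0 0 := by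
  rw [one_sub_dgR, dgR_eq_bordered]
  simp [bordered_mul_bordered]

lemma dgR_mul_bordered_mul_one_sub_dgR :
    dgR E * bordered A v w d * (1 - dgR E) = bordered (E * A * (1 - E)) 0 (w ᵥ* (1 - E)) 0 := by
  rw [one_sub_dgR, dgR_eq_bordered]
  simp [bordered_mul_bordered]

end DiagonalEmbedding

section Action

variable {n : ℕ}

lemma dgC_map_ofReal (g : Matrix (Fin n) (Fin n) ℝ) :
    dgC (g.map fun r : ℝ => (r : ℂ)) = (dgR g).map Complex.ofRealHom := by
  ext i j
  induction i using Fin.lastCases <;> induction j using Fin.lastCases <;> simp [dgC, dgR]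

lemma mact_eq_map_mul_map (g : GL (Fin n) ℝ) (z : Matrix (Fin (n + 1)) (Fin (n + 1)) ℂ) :
    mact g z = (dgR g.val).map Complex.ofRealHom * z * (dgR g⁻¹.val).map Complex.ofRealHom := by
  rw [mact, dgC_map_ofReal, dgC_map_ofReal]

lemma mact_one (z : Matrix (Fin (n + 1)) (Fin (n + 1)) ℂ) : mact 1 z = z := by
  simp [mact_eq_map_mul_map, dgR_one]

lemma mact_mul (g h : GL (Fin n) ℝ) (z : Matrix (Fin (n + 1)) (Fin (n + 1)) ℂ) :
    mact (g * h) z = mact g (mact h z) := by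
  simp only [mact_eq_map_mul_map, _root_.mul_inv_rev, Units.val_mul, dgR_mul, Matrix.map_mul,
    mul_assoc]

lemma iM_eq_smul_map (Y : Matrix (Fin (n + 1)) (Fin (n + 1)) ℝ) :
    iM Y = Complex.I • Y.map Complex.ofRealHom :=
  rfl

lemma iM_add_smul (X Y : Matrix (Fin (n + 1)) (Fin (n + 1)) ℝ) (t : ℝ) :
    iM (X + t • Y) = iM X + t • iM Y := by
  ext i j
  simp [iM, mul_add, mul_left_comm]

lemma mact_iM (g : GL (Fin n) ℝ) (Y : Matrix (Fin (n + 1)) (Fin (n + 1)) ℝ) :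
    mact g (iM Y) = iM (dgR g.val * Y * dgR g⁻¹.val) := by
  simp only [mact_eq_map_mul_map, iM_eq_smul_map, Matrix.map_mul, Matrix.mul_smul, Matrix.smul_mul]

lemma mact_iM_bordered (g : GL (Fin n) ℝ) (A : Matrix (Fin n) (Fin n) ℝ) (v w : Fin n → ℝ)
    (d : ℝ) :
    mact g (iM (bordered A v w d)) =
      iM (bordered (g.val * A * g⁻¹.val) (g.val *ᵥ v) (w ᵥ* g⁻¹.val) d) := by
  rw [mact_iM, dgR_mul_bordered_mul_dgR]

lemma eq_iM_bordered_of_re_eq_zero {z : Matrix (Fin (n + 1)) (Fin (n + 1)) ℂ}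
    (hz : ∀ i j, (z i j).re = 0) :
    z = iM (bordered ((blk0 z).map Complex.im) (Complex.im ∘ blkv z) (Complex.im ∘ blkw z)
      (blkd z).im) := by
  ext i j
  induction i using Fin.lastCases <;> induction j using Fin.lastCases <;>
    simp [iM, blk0, blkv, blkw, blkd, Complex.ext_iff, hz]

end Action

section RegularSemisimple

variable {n : ℕ} {A : Matrix (Fin n) (Fin n) ℝ} {v w : Fin n → ℝ} {d : ℝ}

lemma blk0_iM_bordered :
    blk0 (iM (bordered A v w d)) = Complex.I • A.map Complex.ofRealHom := by
  ext i j
  simp [blk0, iM]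

lemma blkv_iM_bordered : blkv (iM (bordered A v w d)) = Complex.I • (Complex.ofRealHom ∘ v) := by
  ext i
  simp [blkv, iM]

lemma blkw_iM_bordered : blkw (iM (bordered A v w d)) = Complex.I • (Complex.ofRealHom ∘ w) := by
  ext j
  simp [blkw, iM]

lemma map_im_blk0_iM_bordered : (blk0 (iM (bordered A v w d))).map Complex.im = A := by
  ext i j
  simp [blk0_iM_bordered]

lemma im_comp_blkv_iM_bordered : Complex.im ∘ blkv (iM (bordered A v w d)) = v := by
  ext i
  simp [blkv_iM_bordered]

lemma im_comp_blkw_iM_bordered : Complex.im ∘ blkw (iM (bordered A v w d)) = w := by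
  ext j
  simp [blkw_iM_bordered]

lemma im_blkd_iM_bordered : (blkd (iM (bordered A v w d))).im = d := by
  simp [blkd, iM]

lemma rsSpan_iff_isCyclicVector {y : Matrix (Fin (n + 1)) (Fin (n + 1)) ℂ} :
    RSspan y ↔ IsCyclicVector (blk0 y) (blkv y) ∧ IsCyclicVector (blk0 y)ᵀ (blkw y) := by
  simp only [RSspan, IsCyclicVector, Set.range, ← transpose_pow, mulVec_transpose, eq_comm]

lemma rsSpan_iM_bordered_iff :
    RSspan (iM (bordered A v w d)) ↔ IsCyclicVector A v ∧ IsCyclicVector Aᵀ w := by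
  have isUnit_I : IsUnit Complex.I := Complex.I_ne_zero.isUnit
  rw [rsSpan_iff_isCyclicVector, blk0_iM_bordered, blkv_iM_bordered, blkw_iM_bordered,
    transpose_smul, ← transpose_map, isCyclicVector_smul_smul_iff isUnit_I isUnit_I,
    isCyclicVector_smul_smul_iff isUnit_I isUnit_I, isCyclicVector_map_iff, isCyclicVector_map_iff]

lemma RSdef.eq_one_of_mact_mact_eq {y : Matrix (Fin (n + 1)) (Fin (n + 1)) ℂ} (hy : RSdef y)
    {g h : GL (Fin n) ℝ} (hgh : mact g (mact h y) = mact h y) : g = 1 := by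
  have conj_fixes : mact (h⁻¹ * g * h) y = y := by
    rw [mact_mul, mact_mul, hgh, ← mact_mul, inv_mul_cancel, mact_one]
  simpa [mul_assoc, inv_mul_eq_one] using hy.1 _ conj_fixes

lemma mact_idempotentScaling_iM {E : Matrix (Fin n) (Fin n) ℝ} (hE : IsIdempotentElem E)
    (t : ℝˣ) (Y : Matrix (Fin (n + 1)) (Fin (n + 1)) ℝ) :
    mact (Units.map (idempotentScaling hE) t) (iM Y) =
      iM (idempotentScaling (isIdempotentElem_dgR hE) t.val * Y *
        idempotentScaling (isIdempotentElem_dgR hE) t⁻¹.val) := by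
  rw [mact_iM, ← map_inv, Units.coe_map, Units.coe_map, dgR_idempotentScaling,
    dgR_idempotentScaling]

lemma mact_idempotentScaling_iM_peirceDiagonal {E : Matrix (Fin n) (Fin n) ℝ}
    (hE : IsIdempotentElem E) (t : ℝˣ) (Y : Matrix (Fin (n + 1)) (Fin (n + 1)) ℝ) :
    mact (Units.map (idempotentScaling hE) t) (iM (peirceDiagonal (dgR E) Y)) =
      iM (peirceDiagonal (dgR E) Y) := by
  rw [mact_idempotentScaling_iM, (commute_idempotentScaling_peirceDiagonal _ Y _).eq, mul_assoc,
    ← map_mul, Units.mul_inv, map_one, mul_one]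

/- Letting `t → 0`, the closed orbit contains `peirceDiagonal (dgR E) Y`, which is stabilized by
the one-parameter group of `E`. -/
lemma RSdef.idempotent_eq_one_of_forall_exists_mact_eq
    {X Y : Matrix (Fin (n + 1)) (Fin (n + 1)) ℝ} (hY : RSdef (iM Y))
    {E : Matrix (Fin n) (Fin n) ℝ} (hE : IsIdempotentElem E)
    (hX : ∀ t : ℝ, t ≠ 0 → ∃ g : GL (Fin n) ℝ,
      mact g (iM Y) = iM (peirceDiagonal (dgR E) Y + t • X)) :
    E = 1 := by
  obtain ⟨h, hh⟩ : ∃ h : GL (Fin n) ℝ, iM (peirceDiagonal (dgR E) Y) = mact h (iM Y) := by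
    refine hY.2.mem_of_forall_add_smul_mem (b := iM X) fun t ht => ?_
    obtain ⟨g, hg⟩ := hX t ht
    exact ⟨g, by rw [hg, iM_add_smul]⟩
  have fixes_limit := mact_idempotentScaling_iM_peirceDiagonal hE (Units.mk0 2 two_ne_zero) Y
  rw [hh] at fixes_limit
  have scaling_eq_one : E + (2 : ℝ) • (1 - E) = 1 :=
    congrArg Units.val (hY.eq_one_of_mact_mact_eq fixes_limit)
  calc E = (2 : ℝ) • 1 - (E + (2 : ℝ) • (1 - E)) := by module
    _ = 1 := by rw [scaling_eq_one]; module

lemma RSdef.idempotent_eq_one_of_lower_eq_zero {Y : Matrix (Fin (n + 1)) (Fin (n + 1)) ℝ}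
    (hY : RSdef (iM Y)) {E : Matrix (Fin n) (Fin n) ℝ} (hE : IsIdempotentElem E)
    (h : (1 - dgR E) * Y * dgR E = 0) : E = 1 :=
  hY.idempotent_eq_one_of_forall_exists_mact_eq hE fun t ht =>
    ⟨Units.map (idempotentScaling hE) (Units.mk0 t ht)⁻¹, by
      rw [mact_idempotentScaling_iM, idempotentScaling_mul_mul _ _ (Units.mul_inv _), h, smul_zero,
        add_zero, inv_inv, Units.val_mk0]⟩

lemma RSdef.idempotent_eq_one_of_upper_eq_zero {Y : Matrix (Fin (n + 1)) (Fin (n + 1)) ℝ}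
    (hY : RSdef (iM Y)) {E : Matrix (Fin n) (Fin n) ℝ} (hE : IsIdempotentElem E)
    (h : dgR E * Y * (1 - dgR E) = 0) : E = 1 :=
  hY.idempotent_eq_one_of_forall_exists_mact_eq hE fun t ht =>
    ⟨Units.map (idempotentScaling hE) (Units.mk0 t ht), by
      rw [mact_idempotentScaling_iM, idempotentScaling_mul_mul _ _ (Units.mul_inv _), h, smul_zero,
        add_zero, Units.val_mk0]⟩

lemma RSdef.isCyclicVector (h : RSdef (iM (bordered A v w d))) : IsCyclicVector A v := by
  by_contra hv
  obtain ⟨E, hE, hE_ne_one, hEA, hEv⟩ := exists_isIdempotentElem_of_not_isCyclicVector hv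
  refine hE_ne_one (h.idempotent_eq_one_of_lower_eq_zero hE ?_)
  rw [one_sub_dgR_mul_bordered_mul_dgR, hEA, hEv, bordered_zero]

lemma RSdef.isCyclicVector_transpose (h : RSdef (iM (bordered A v w d))) :
    IsCyclicVector Aᵀ w := by
  by_contra hw
  obtain ⟨E, hE, hE_ne_one, hEA, hEw⟩ := exists_isIdempotentElem_of_not_isCyclicVector hw
  have hEt : IsIdempotentElem Eᵀ := by rw [IsIdempotentElem, ← transpose_mul, hE.eq]
  have hAEt : Eᵀ * A * (1 - Eᵀ) = 0 := by
    simpa [transpose_mul, mul_assoc] using congrArg transpose hEA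
  have hwEt : w ᵥ* (1 - Eᵀ) = 0 := by
    rwa [← mulVec_transpose, transpose_sub, transpose_one, transpose_transpose]
  refine hE_ne_one (transpose_eq_one.1 (h.idempotent_eq_one_of_upper_eq_zero hEt ?_))
  rw [dgR_mul_bordered_mul_one_sub_dgR, hAEt, hwEt, bordered_zero]

lemma IsCyclicVector.eq_one_of_mact_eq (hv : IsCyclicVector A v) {g : GL (Fin n) ℝ}
    (hg : mact g (iM (bordered A v w d)) = iM (bordered A v w d)) : g = 1 := by
  rw [mact_iM_bordered] at hg
  have conj_eq : g.val * A * g⁻¹.val = A := by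
    simpa only [map_im_blk0_iM_bordered] using congrArg (fun z => (blk0 z).map Complex.im) hg
  have mulVec_eq : g.val *ᵥ v = v := by
    simpa only [im_comp_blkv_iM_bordered] using congrArg (fun z => Complex.im ∘ blkv z) hg
  exact Units.ext (hv.eq_one_of_commute (g.mul_inv_eq_iff_eq_mul.1 conj_eq) mulVec_eq)

lemma exists_eq_mact_iff (hv : IsCyclicVector A v) (hw : IsCyclicVector Aᵀ w)
    {z : Matrix (Fin (n + 1)) (Fin (n + 1)) ℂ} :
    (∃ g : GL (Fin n) ℝ, z = mact g (iM (bordered A v w d))) ↔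
      (∀ i j, (z i j).re = 0) ∧
      (∀ k, moment ((blk0 z).map Complex.im) (Complex.im ∘ blkv z) (Complex.im ∘ blkw z) k =
        moment A v w k) ∧
      (blkd z).im = d := by
  constructor
  · rintro ⟨g, rfl⟩
    rw [mact_iM_bordered, map_im_blk0_iM_bordered, im_comp_blkv_iM_bordered,
      im_comp_blkw_iM_bordered, im_blkd_iM_bordered]
    exact ⟨fun _ _ => by simp [iM], moment_conj g A v w, rfl⟩
  · rintro ⟨hre, hmoment, hd⟩
    obtain ⟨g, hA, hv, hw⟩ := exists_conj_of_moment_eq hv hw hmoment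
    refine ⟨g, (eq_iM_bordered_of_re_eq_zero hre).trans ?_⟩
    rw [mact_iM_bordered, hA, hv, hw, hd]

lemma isRZClosed_orbit (hv : IsCyclicVector A v) (hw : IsCyclicVector Aᵀ w) :
    IsRZClosed {z | ∃ g : GL (Fin n) ℝ, z = mact g (iM (bordered A v w d))} := by
  have re_entry (i j) : IsPolyFun fun z : Matrix (Fin (n + 1)) (Fin (n + 1)) ℂ => (z i j).re :=
    .linearMap (Complex.reLm ∘ₗ entryLinearMap ℝ ℂ i j)
  have im_entry (i j) : IsPolyFun fun z : Matrix (Fin (n + 1)) (Fin (n + 1)) ℂ => (z i j).im :=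
    .linearMap (Complex.imLm ∘ₗ entryLinearMap ℝ ℂ i j)
  have im_moment (k) : IsPolyFun fun z : Matrix (Fin (n + 1)) (Fin (n + 1)) ℂ =>
      moment ((blk0 z).map Complex.im) (Complex.im ∘ blkv z) (Complex.im ∘ blkw z) k :=
    .moment (fun _ _ => im_entry _ _) (fun _ => im_entry _ _) (fun _ => im_entry _ _) k
  simp only [exists_eq_mact_iff hv hw]
  exact .inter (.setOf_forall fun i => .setOf_forall fun j => .setOf_eq (re_entry i j) 0) <|
    .inter (.setOf_forall fun k => .setOf_eq (im_moment k) _) (.setOf_eq (im_entry _ _) d)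

lemma rsDef_iM_bordered_iff :
    RSdef (iM (bordered A v w d)) ↔ IsCyclicVector A v ∧ IsCyclicVector Aᵀ w :=
  ⟨fun h => ⟨h.isCyclicVector, h.isCyclicVector_transpose⟩,
    fun ⟨hv, hw⟩ => ⟨fun _ => hv.eq_one_of_mact_eq, isRZClosed_orbit hv hw⟩⟩

lemma re_eq_zero_of_mem_sSet {y : Matrix (Fin (n + 1)) (Fin (n + 1)) ℂ} (hy : y ∈ sSet n)
    (i j : Fin (n + 1)) : (y i j).re = 0 := by
  have hij : y i j + starRingEnd ℂ (y i j) = 0 := congrFun (congrFun hy i) j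
  simpa [Complex.add_conj] using hij

end RegularSemisimple

/-- an element of `s_{n+1}` is regular semi-simple (trivial stabilizer and
Zariski-closed orbit) iff `ℂ[y₀]·v = ℂⁿ` and `w·ℂ[y₀] = ℂ_n`. -/
theorem stmt0 (n : ℕ) (y : Matrix (Fin (n+1)) (Fin (n+1)) ℂ) (hy : y ∈ sSet n) :
    RSdef y ↔ RSspan y := by
  rw [eq_iM_bordered_of_re_eq_zero (re_eq_zero_of_mem_sSet hy), rsDef_iM_bordered_iff,
    rsSpan_iM_bordered_iff]

end
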